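/- Let σ > 0, v̄ > 0 and α ∈ [−2, 2], and define the reduced vector field g(x) = (σ/(2v̄))(1 − x²)(2x + 3α)/(6 + αx) and the unfolded pitchfork field P(x) = x(1 − x²) + (3/2)α − (3/2)α x². Then for every x ∈ [−1, 1] one has 6 + αx > 0 and g(x) = c(x) · P(x), where c(x) = σ/(v̄(6 + αx)) > 0. In particular g and P have exactly the same zeros on [−1, 1] and the same sign at every point of [−1, 1], so the reduced dynamics ẋ = g(x) are equivalent, up to a positive time rescaling, to an unfolding of the pitchfork bifurcation ẋ = x(μ − x²) + α₁ + α₂x² with μ = 1, α₁ = (3/2)α and α₂ = −(3/2)α. -/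

import Mathlib

/-- The reduced (singularly perturbed) motivation vector field
`g(x) = (σ/(2 vbar)) (1 − x²)(2x + 3α)/(6 + αx)`. -/
noncomputable def gred (σ vbar α x : ℝ) : ℝ :=
  σ / (2 * vbar) * ((1 - x ^ 2) * (2 * x + 3 * α) / (6 + α * x))

/-- The unfolded pitchfork vector field with `μ = 1`, `α₁ = (3/2)α`, `α₂ = −(3/2)α`:
`P(x) = x(1 − x²) + (3/2)α − (3/2)α x²`. -/
noncomputable def punf (α x : ℝ) : ℝ := x * (1 - x ^ 2) + 3 / 2 * α - 3 / 2 * α * x ^ 2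

theorem add_mul_pos_of_abs_lt_of_abs_le_one {R : Type*} [CommRing R] [LinearOrder R]
    [IsStrictOrderedRing R] {a b x : R} (ha : |a| < b) (hx : |x| ≤ 1) : 0 < b + a * x := by
  have abs_mul_lt : |a * x| < b :=
    calc |a * x| = |a| * |x| := abs_mul a x
      _ ≤ |a| := mul_le_of_le_one_right (abs_nonneg a) hx
      _ < b := ha
  exact neg_lt_iff_pos_add'.1 (neg_lt_of_abs_lt abs_mul_lt)

theorem punf_eq_mul_div_two (α x : ℝ) : punf α x = (1 - x ^ 2) * (2 * x + 3 * α) / 2 := by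
  rw [punf]
  ring

theorem gred_eq_mul_punf (σ vbar α x : ℝ) :
    gred σ vbar α x = σ / (vbar * (6 + α * x)) * punf α x := by
  rw [gred, punf_eq_mul_div_two, div_mul_div_comm, div_mul_div_comm, mul_right_comm vbar,
    mul_comm vbar 2]

theorem reduced_dynamics_is_unfolded_pitchfork_general {σ vbar α : ℝ} (hσ : 0 < σ)
    (hv : 0 < vbar) (hα : |α| < 6) :
    ∀ x ∈ Set.Icc (-1 : ℝ) 1,
      0 < 6 + α * x ∧
      gred σ vbar α x = σ / (vbar * (6 + α * x)) * punf α x ∧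
      0 < σ / (vbar * (6 + α * x)) ∧
      (gred σ vbar α x = 0 ↔ punf α x = 0) ∧
      (0 < gred σ vbar α x ↔ 0 < punf α x) ∧
      (gred σ vbar α x < 0 ↔ punf α x < 0) := by
  intro x hx
  have denom_pos : 0 < 6 + α * x := add_mul_pos_of_abs_lt_of_abs_le_one hα (abs_le.2 hx)
  have factor_pos : 0 < σ / (vbar * (6 + α * x)) := div_pos hσ (mul_pos hv denom_pos)
  refine ⟨denom_pos, gred_eq_mul_punf σ vbar α x, factor_pos, ?_⟩
  rw [gred_eq_mul_punf]
  exact ⟨mul_eq_zero_iff_left factor_pos.ne', mul_pos_iff_of_pos_left factor_pos,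
    smul_neg_iff_of_pos_left factor_pos⟩

/-- for `σ > 0`, `vbar > 0`, `α ∈ [−2, 2]` and every `x ∈ [−1, 1]`:
`6 + αx > 0`, `g(x) = c(x) P(x)` with `c(x) = σ/(vbar (6 + αx)) > 0`; in particular
`g` and `P` have the same zeros and the same sign on `[−1, 1]`, so `ẋ = g(x)` is a
positive time rescaling of the pitchfork unfolding `ẋ = x(1 − x²) + (3/2)α − (3/2)α x²`. -/
theorem reduced_dynamics_is_unfolded_pitchfork (σ vbar α : ℝ) (hσ : 0 < σ)
    (hv : 0 < vbar) (hα : α ∈ Set.Icc (-2 : ℝ) 2) :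
    ∀ x ∈ Set.Icc (-1 : ℝ) 1,
      0 < 6 + α * x ∧
      gred σ vbar α x = σ / (vbar * (6 + α * x)) * punf α x ∧
      0 < σ / (vbar * (6 + α * x)) ∧
      (gred σ vbar α x = 0 ↔ punf α x = 0) ∧
      (0 < gred σ vbar α x ↔ 0 < punf α x) ∧
      (gred σ vbar α x < 0 ↔ punf α x < 0) :=
  reduced_dynamics_is_unfolded_pitchfork_general hσ hv ((abs_le.2 hα).trans_lt (by norm_num))
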